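/- arXiv:1504.04250 — 2 statements merged into one kernel-verified Lean document; each statement's English description precedes it below -/
import Mathlib

section
/- Let p ∈ (1,∞), γ > 0, and let Y be a real Banach space with property (β_p) with constant γ. Then for every integer h ≥ 2, c_Y(T^ω_h) ≥ 2·γ^{1/p}·(log₂(h/2))^{1/p}. -/
open Set Function Filter

open scoped ENNReal

attribute [local instance] Classical.propDecidable

noncomputable section

def LipUB {α β : Type*} (dα : α → α → ℝ) (dβ : β → β → ℝ) (f : α → β) (L : ℝ) : Prop :=
  ∀ a b : α, dβ (f a) (f b) ≤ L * dα a b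

def CoLipUB {α β : Type*} (dα : α → α → ℝ) (dβ : β → β → ℝ) (f : α → β) (C : ℝ) : Prop :=
  ∀ a b : α, dα a b ≤ C * dβ (f a) (f b)

def IsBiLipEmb {α β : Type*} (dα : α → α → ℝ) (dβ : β → β → ℝ) (f : α → β) : Prop :=
  Function.Injective f ∧ ∃ L C : ℝ, LipUB dα dβ f L ∧ CoLipUB dα dβ f C

def distortionSet (α β : Type*) (dα : α → α → ℝ) (dβ : β → β → ℝ) : Set ℝ :=
  {D | ∃ f : α → β, Function.Injective f ∧ ∃ L C : ℝ,
    LipUB dα dβ f L ∧ CoLipUB dα dβ f C ∧ D = L * C}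

def cDist (α β : Type*) (dα : α → α → ℝ) (dβ : β → β → ℝ) : ℝ≥0∞ :=
  ⨅ D ∈ distortionSet α β dα dβ, ENNReal.ofReal D
def rolewiczSet (Y : Type*) [SeminormedAddCommGroup Y] (t : ℝ) : Set ℝ :=
  {s | ∃ x : Y, ‖x‖ ≤ 1 ∧ ∃ y : ℕ → Y, (∀ i, ‖y i‖ ≤ 1) ∧
    (∀ n m : ℕ, n ≠ m → t ≤ ‖y n - y m‖) ∧ s = ⨅ i, ‖x - y i‖ / 2}

def rolewiczMod (Y : Type*) [SeminormedAddCommGroup Y] (t : ℝ) : ℝ :=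
  1 - sSup (rolewiczSet Y t)

def HasBeta (Y : Type*) [SeminormedAddCommGroup Y] : Prop :=
  ∀ t : ℝ, 0 < t → t ≤ 2 → 0 < rolewiczMod Y t

def HasBetaP (Y : Type*) [SeminormedAddCommGroup Y] (p γ : ℝ) : Prop :=
  ∀ t : ℝ, 0 < t → t ≤ 2 → (rolewiczSet Y t).Nonempty → γ * t ^ p ≤ rolewiczMod Y t
def lcpLen : List ℕ → List ℕ → ℕ
  | a :: x, b :: y => if a = b then lcpLen x y + 1 else 0
  | _, _ => 0

def treeDist (x y : List ℕ) : ℝ :=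
  (x.length : ℝ) + (y.length : ℝ) - 2 * (lcpLen x y : ℝ)

def TreeOmega (h : ℕ) : Type := {x : List ℕ // x.length ≤ h}

def tDist (h : ℕ) : TreeOmega h → TreeOmega h → ℝ := fun x y => treeDist x.1 y.1

theorem aux_lcp_append (u x y : List ℕ) :
    lcpLen (u ++ x) (u ++ y) = u.length + lcpLen x y := by
  induction u with
  | nil => simp
  | cons a u ih => simp [lcpLen, ih]; omega

theorem aux_td_append (u w : List ℕ) : treeDist u (u ++ w) = w.length := by
  have h := aux_lcp_append u [] w
  have h0 : lcpLen [] w = 0 := by simp [lcpLen]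
  rw [List.append_nil, h0] at h
  simp only [treeDist, h, List.length_append]
  push_cast; ring

theorem aux_td_fork (u x y : List ℕ) (i j : ℕ) (hij : i ≠ j) :
    treeDist (u ++ i :: x) (u ++ j :: y) = (i :: x).length + (j :: y).length := by
  have h := aux_lcp_append u (i :: x) (j :: y)
  have h0 : lcpLen (i :: x) (j :: y) = 0 := by simp [lcpLen, hij]
  rw [h0] at h
  simp only [treeDist, h, List.length_append]
  push_cast; ring

theorem aux_fork {Y : Type*} [NormedAddCommGroup Y] [NormedSpace ℝ Y]
    (p γ : ℝ) (hY : HasBetaP Y p γ) (L N s : ℝ) (hL : 1 ≤ L) (hN : 0 < N)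
    (hs : s < γ * (2 / L) ^ p) (X : Y) (Z : ℕ → Y) (hX : ‖X‖ ≤ N * L)
    (hZ : ∀ i, ‖Z i‖ ≤ N * L) (hsep : ∀ i j, i ≠ j → 2 * N ≤ ‖Z i - Z j‖) :
    ∃ i, ‖X - Z i‖ ≤ 2 * (N * L) * (1 - s) := by
  have hL0 : 0 < L := by linarith
  have hR : 0 < N * L := by positivity
  set R := N * L with hRdef
  have hnorm : ∀ v : Y, ‖R⁻¹ • v‖ = ‖v‖ / R := by
    intro v
    rw [norm_smul, norm_inv, Real.norm_of_nonneg hR.le]; field_simp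
  have hmem : (⨅ i, ‖R⁻¹ • X - R⁻¹ • Z i‖ / 2) ∈ rolewiczSet Y (2 / L) := by
    refine ⟨R⁻¹ • X, ?_, fun i => R⁻¹ • Z i, ?_, ?_, rfl⟩
    · rw [hnorm, div_le_one hR]; exact hX
    · intro i
      rw [hnorm, div_le_one hR]; exact hZ i
    · intro n m hnm
      rw [← smul_sub, hnorm, div_le_div_iff₀ hL0 hR, hRdef]
      nlinarith [mul_le_mul_of_nonneg_right (hsep n m hnm) hL0.le]
  have hbdd : BddAbove (rolewiczSet Y (2 / L)) := by
    refine ⟨1, ?_⟩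
    rintro _ ⟨x, hx, y, hy, -, rfl⟩
    refine (ciInf_le ⟨0, ?_⟩ 0).trans ?_
    · rintro _ ⟨i, rfl⟩; positivity
    · have := norm_sub_le x (y 0)
      have := hy 0
      linarith
  have h1 := hY (2 / L) (by positivity) (by rw [div_le_iff₀ hL0]; linarith) ⟨_, hmem⟩
  have h2 := le_csSup hbdd hmem
  have h3 : (⨅ i, ‖R⁻¹ • X - R⁻¹ • Z i‖ / 2) < 1 - s := by
    unfold rolewiczMod at h1; linarith
  obtain ⟨i, hi⟩ := exists_lt_of_ciInf_lt h3
  refine ⟨i, ?_⟩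
  rw [← smul_sub, hnorm, div_div, div_lt_iff₀ (by positivity)] at hi
  nlinarith

theorem aux_iter {Y : Type*} [NormedAddCommGroup Y] [NormedSpace ℝ Y]
    (p γ : ℝ) (hp : 1 < p) (hγ : 0 < γ) (hY : HasBetaP Y p γ) (h : ℕ)
    (F : List ℕ → Y) (D : ℝ)
    (hup : ∀ u v : List ℕ, u.length ≤ h → v.length ≤ h → ‖F u - F v‖ ≤ D * treeDist u v)
    (hlo : ∀ u v : List ℕ, u.length ≤ h → v.length ≤ h → treeDist u v ≤ ‖F u - F v‖)
    (c : ℝ) (hc0 : 0 ≤ c) (hc : c < γ * 2 ^ p * D ^ (1 - p)) (k : ℕ) :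
    ∀ u : List ℕ, u.length + 2 ^ k ≤ h → ∀ a : ℕ, ∃ w : List ℕ,
      (a :: w).length = 2 ^ k ∧ ‖F u - F (u ++ a :: w)‖ ≤ 2 ^ k * (D - k * c) := by
  induction k with
  | zero =>
    intro u hu a
    refine ⟨[], by simp, ?_⟩
    have := hup u (u ++ [a]) (by omega) (by simp; omega)
    rw [aux_td_append] at this
    simpa using this
  | succ k ih =>
    intro u hu a
    have hpow : 2 ^ (k + 1) = 2 * 2 ^ k := by ring
    rw [hpow] at hu
    obtain ⟨w, hw, hwb⟩ := ih u (by omega) a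
    set z := u ++ a :: w with hz
    have hzl : z.length = u.length + 2 ^ k := by rw [hz, List.length_append, hw]
    choose W hW hWb using ih z (by omega)
    set L := D - k * c with hLdef
    have hN : (0 : ℝ) < 2 ^ k := by positivity
    have hL : 1 ≤ L := by
      have h1 := hlo u z (by omega) (by omega)
      rw [hz, aux_td_append, hw] at h1
      push_cast at h1
      have := h1.trans hwb
      by_contra hcon
      nlinarith
    have hL0 : 0 < L := by linarith
    have hkc : 0 ≤ k * c := by positivity
    have hLD : L ≤ D := by linarith
    have hs : c / L < γ * (2 / L) ^ p := by
      rw [div_lt_iff₀ hL0]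
      have e1 : γ * (2 / L) ^ p * L = γ * 2 ^ p * L ^ (1 - p) := by
        rw [Real.div_rpow (by norm_num) hL0.le, Real.rpow_sub hL0, Real.rpow_one]; ring
      rw [e1]
      refine hc.trans_le ?_
      have := Real.rpow_le_rpow_of_nonpos hL0 hLD (by linarith : 1 - p ≤ 0)
      have h2 : (0 : ℝ) < 2 ^ p := by positivity
      gcongr
    have hzi : ∀ i, (z ++ i :: W i).length = u.length + 2 * 2 ^ k := by
      intro i; rw [List.length_append, hW, hzl]; ring
    obtain ⟨i, hi⟩ := aux_fork p γ hY L (2 ^ k) (c / L) hL hN hs (F u - F z)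
      (fun i => F (z ++ i :: W i) - F z) hwb
      (fun i => by rw [norm_sub_rev]; exact hWb i)
      (fun i j hij => by
        have h1 := hlo (z ++ i :: W i) (z ++ j :: W j) (by rw [hzi]; omega) (by rw [hzi]; omega)
        rw [aux_td_fork _ _ _ _ _ hij, hW, hW] at h1
        push_cast at h1
        have e : F (z ++ i :: W i) - F z - (F (z ++ j :: W j) - F z)
          = F (z ++ i :: W i) - F (z ++ j :: W j) := by abel
        rw [e]; linarith)
    refine ⟨w ++ i :: W i, ?_, ?_⟩
    · rw [← List.cons_append, List.length_append, hw, hW]; ring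
    · have e : u ++ a :: (w ++ i :: W i) = z ++ i :: W i := by simp [hz]
      rw [e]
      simp only [sub_sub_sub_cancel_right] at hi
      refine hi.trans (le_of_eq ?_)
      have : L * (1 - c / L) = L - c := by field_simp
      calc 2 * (2 ^ k * L) * (1 - c / L) = 2 * 2 ^ k * (L * (1 - c / L)) := by ring
        _ = _ := by rw [this, hLdef]; push_cast; ring

theorem aux_main {Y : Type*} [NormedAddCommGroup Y] [NormedSpace ℝ Y]
    (p γ : ℝ) (hp : 1 < p) (hγ : 0 < γ) (hY : HasBetaP Y p γ) (h : ℕ) (hh : 2 ≤ h)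
    (F : List ℕ → Y) (D : ℝ)
    (hup : ∀ u v : List ℕ, u.length ≤ h → v.length ≤ h → ‖F u - F v‖ ≤ D * treeDist u v)
    (hlo : ∀ u v : List ℕ, u.length ≤ h → v.length ≤ h → treeDist u v ≤ ‖F u - F v‖) :
    2 * γ ^ (1 / p) * Real.logb 2 ((h : ℝ) / 2) ^ (1 / p) ≤ D := by
  have hD : 1 ≤ D := by
    have h1 := hup [] ([] ++ [0]) (by simp) (by simp; omega)
    have h2 := hlo [] ([] ++ [0]) (by simp) (by simp; omega)
    rw [aux_td_append] at h1 h2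
    simp at h1 h2
    linarith
  have hD0 : 0 < D := by linarith
  set n := Nat.log 2 h with hn
  have hnh : 2 ^ n ≤ h := Nat.pow_log_le_self 2 (by omega)
  have hhn : h < 2 ^ (n + 1) := Nat.lt_pow_succ_log_self (by norm_num) h
  set c₀ := γ * 2 ^ p * D ^ (1 - p) with hc₀
  have hc₀p : 0 < c₀ := by positivity
  have key : ∀ c, 0 ≤ c → c < c₀ → n * c ≤ D := by
    intro c h0 h1
    obtain ⟨w, hw, hb⟩ := aux_iter p γ hp hγ hY h F D hup hlo c h0 h1 n [] (by simpa using hnh) 0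
    have h2 := hlo [] ([] ++ 0 :: w) (by simp) (by rw [List.nil_append, hw]; exact hnh)
    rw [aux_td_append, hw] at h2
    push_cast at h2
    have h3 := h2.trans hb
    have hN : (0 : ℝ) < 2 ^ n := by positivity
    by_contra hcon
    nlinarith
  have key2 : n * c₀ ≤ D := by
    refine le_of_forall_lt_imp_le_of_dense ?_
    intro x hx
    rcases Nat.eq_zero_or_pos n with h0 | h0
    · rw [h0] at hx; simp at hx; linarith
    · have hn0 : (0 : ℝ) < n := by exact_mod_cast h0
      rcases le_or_gt x 0 with hx0 | hx0
      · linarith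
      · have := key (x / n) (by positivity) (by rw [div_lt_iff₀ hn0]; linarith)
        rwa [mul_div_cancel₀ _ hn0.ne'] at this
  have hl0 : 0 ≤ Real.logb 2 ((h : ℝ) / 2) := by
    apply Real.logb_nonneg (by norm_num)
    have : (2 : ℝ) ≤ h := by exact_mod_cast hh
    linarith
  have hln : Real.logb 2 ((h : ℝ) / 2) ≤ n := by
    rw [Real.logb_le_iff_le_rpow (by norm_num) (by positivity), Real.rpow_natCast]
    have : (h : ℝ) < 2 ^ (n + 1) := by exact_mod_cast hhn
    rw [pow_succ] at this
    linarith
  have hp0 : p ≠ 0 := by linarith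
  have e1 : 2 * γ ^ (1 / p) * Real.logb 2 ((h : ℝ) / 2) ^ (1 / p)
      = (2 ^ p * γ * Real.logb 2 ((h : ℝ) / 2)) ^ (1 / p) := by
    rw [Real.mul_rpow (by positivity) hl0, Real.mul_rpow (by positivity) hγ.le,
      ← Real.rpow_mul (by norm_num), mul_one_div_cancel hp0, Real.rpow_one]
  have e2 : D = (D ^ p) ^ (1 / p) := by
    rw [← Real.rpow_mul hD0.le, mul_one_div_cancel hp0, Real.rpow_one]
  rw [e1, e2]
  apply Real.rpow_le_rpow (by positivity) _ (by positivity)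
  have e3 : D ^ p = D * D ^ (p - 1) := by
    rw [Real.rpow_sub hD0, Real.rpow_one]; field_simp
  have e4 : D ^ (1 - p) * D ^ (p - 1) = 1 := by
    rw [← Real.rpow_add hD0]; simp
  rw [e3]
  calc 2 ^ p * γ * Real.logb 2 ((h : ℝ) / 2) ≤ 2 ^ p * γ * n := by gcongr
    _ = n * c₀ * D ^ (p - 1) := by
      rw [hc₀]; linear_combination (-(2 ^ p * γ * n)) * e4
    _ ≤ D * D ^ (p - 1) := by gcongr

/-- Theorem 2.5, second part: if `Y` has property (β_p) with
constant `γ` then `c_Y(T^ω_h) ≥ 2 γ^{1/p} (log₂(h/2))^{1/p}` for all `h ≥ 2`. -/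
theorem tree_distortion_lower_bound
    (Y : Type*) [NormedAddCommGroup Y] [NormedSpace ℝ Y] [CompleteSpace Y]
    (p γ : ℝ) (hp : 1 < p) (hγ : 0 < γ) (hY : HasBetaP Y p γ)
    (h : ℕ) (hh : 2 ≤ h) :
    ENNReal.ofReal (2 * γ ^ (1 / p) * Real.logb 2 ((h : ℝ) / 2) ^ (1 / p)) ≤
      cDist (TreeOmega h) Y (tDist h) (fun a b : Y => dist a b) := by
  refine le_iInf₂ ?_
  rintro _ ⟨f, -, L, C, hL, hC, rfl⟩
  apply ENNReal.ofReal_le_ofReal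
  have hC0 : 0 < C := by
    have h1 := hC ⟨[], by simp⟩ ⟨[] ++ [0], by simp; omega⟩
    simp only [tDist, aux_td_append] at h1
    by_contra hcon
    have := dist_nonneg (x := f ⟨[], by simp⟩) (y := f ⟨[] ++ [0], by simp; omega⟩)
    simp only [List.length_singleton, Nat.cast_one] at h1
    nlinarith
  refine aux_main p γ hp hγ hY h hh
    (fun u => if hu : u.length ≤ h then C • f ⟨u, hu⟩ else 0) (L * C) ?_ ?_
  · intro u v hu hv
    simp only [hu, hv, dif_pos, ← smul_sub, norm_smul, Real.norm_of_nonneg hC0.le, ← dist_eq_norm]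
    have := hL ⟨u, hu⟩ ⟨v, hv⟩
    simp only [tDist] at this
    nlinarith
  · intro u v hu hv
    simp only [hu, hv, dif_pos, ← smul_sub, norm_smul, Real.norm_of_nonneg hC0.le, ← dist_eq_norm]
    exact hC ⟨u, hu⟩ ⟨v, hv⟩

end
end

section
/- Let Y be a real Banach space with property (β), let ℓ ≥ 2 be an integer, let D ≥ 1, and suppose there exists a bi-Lipschitz embedding of P^ω_ℓ into Y with distortion at most D. Then c_Y(P^ω_{ℓ−1}) ≤ D·(1 − (2/3)·β̄_Y(2/D)). -/
open Set Function Filter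

open scoped ENNReal

attribute [local instance] Classical.propDecidable

noncomputable section

inductive P1V : Type | r | b | s | t (i : ℕ)

def parasolBase : Σ (Vt : Type) (Et : Type), Et → Vt × Vt :=
  ⟨P1V, Unit ⊕ ℕ ⊕ ℕ, fun e =>
    match e with
    | Sum.inl _ => (P1V.r, P1V.b)
    | Sum.inr (Sum.inl i) => (P1V.b, P1V.t i)
    | Sum.inr (Sum.inr i) => (P1V.t i, P1V.s)⟩

def parasolStep (d : Σ (Vt : Type) (Et : Type), Et → Vt × Vt) :
    Σ (Vt : Type) (Et : Type), Et → Vt × Vt :=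
  ⟨d.1 ⊕ d.2.1 × (Unit ⊕ ℕ), d.2.1 × (Unit ⊕ ℕ ⊕ ℕ), fun e =>
    match e with
    | (e, Sum.inl _) => (Sum.inl (d.2.2 e).1, Sum.inr (e, Sum.inl ()))
    | (e, Sum.inr (Sum.inl i)) => (Sum.inr (e, Sum.inl ()), Sum.inr (e, Sum.inr i))
    | (e, Sum.inr (Sum.inr i)) => (Sum.inr (e, Sum.inr i), Sum.inl (d.2.2 e).2)⟩

def parasolData : ℕ → Σ (Vt : Type) (Et : Type), Et → Vt × Vt
  | 0 => parasolBase
  | (n+1) => parasolStep (parasolData n)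

def PVert (n : ℕ) : Type := (parasolData n).1

def parasolGraph (n : ℕ) : SimpleGraph (PVert n) :=
  SimpleGraph.fromRel (fun x y => ∃ e, (parasolData n).2.2 e = (x, y))

def pGDist (n : ℕ) : PVert n → PVert n → ℝ :=
  fun x y => ((parasolGraph n).dist x y : ℝ)

abbrev PData := Σ (Vt : Type) (Et : Type), Et → Vt × Vt

def dGraph (d : PData) : SimpleGraph d.1 :=
  SimpleGraph.fromRel (fun x y => ∃ e, d.2.2 e = (x, y))

lemma dGraph_base_connected : (dGraph parasolBase).Connected := by
  have hrb : (dGraph parasolBase).Adj P1V.r P1V.b := by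
    refine (SimpleGraph.fromRel_adj _ _ _).2 ⟨?_, Or.inl ⟨Sum.inl (), rfl⟩⟩
    exact fun h => P1V.noConfusion h
  have hbt : ∀ i, (dGraph parasolBase).Adj P1V.b (P1V.t i) := fun i => by
    refine (SimpleGraph.fromRel_adj _ _ _).2 ⟨?_, Or.inl ⟨Sum.inr (Sum.inl i), rfl⟩⟩
    exact fun h => P1V.noConfusion h
  have hts : ∀ i, (dGraph parasolBase).Adj (P1V.t i) P1V.s := fun i => by
    refine (SimpleGraph.fromRel_adj _ _ _).2 ⟨?_, Or.inl ⟨Sum.inr (Sum.inr i), rfl⟩⟩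
    exact fun h => P1V.noConfusion h
  refine (SimpleGraph.connected_iff_exists_forall_reachable _).2 ⟨P1V.b, ?_⟩
  intro w
  cases w with
  | r => exact hrb.symm.reachable
  | b => exact SimpleGraph.Reachable.refl _
  | s => exact (hbt 0).reachable.trans (hts 0).reachable
  | t i => exact (hbt i).reachable

lemma step_adj_rb (d : PData) (e : d.2.1) :
    (dGraph (parasolStep d)).Adj (Sum.inl (d.2.2 e).1) (Sum.inr (e, Sum.inl ())) :=
  (SimpleGraph.fromRel_adj _ _ _).2 ⟨fun h => (by cases h), Or.inl ⟨(e, Sum.inl ()), rfl⟩⟩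

lemma step_adj_bt (d : PData) (e : d.2.1) (i : ℕ) :
    (dGraph (parasolStep d)).Adj (Sum.inr (e, Sum.inl ())) (Sum.inr (e, Sum.inr i)) :=
  (SimpleGraph.fromRel_adj _ _ _).2
    ⟨fun h => (by cases h), Or.inl ⟨(e, Sum.inr (Sum.inl i)), rfl⟩⟩

lemma step_adj_ts (d : PData) (e : d.2.1) (i : ℕ) :
    (dGraph (parasolStep d)).Adj (Sum.inr (e, Sum.inr i)) (Sum.inl (d.2.2 e).2) :=
  (SimpleGraph.fromRel_adj _ _ _).2
    ⟨fun h => (by cases h), Or.inl ⟨(e, Sum.inr (Sum.inr i)), rfl⟩⟩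

lemma step_reach_edge (d : PData) (e : d.2.1) :
    (dGraph (parasolStep d)).Reachable (Sum.inl (d.2.2 e).1) (Sum.inl (d.2.2 e).2) :=
  ((step_adj_rb d e).reachable.trans (step_adj_bt d e 0).reachable).trans
    (step_adj_ts d e 0).reachable

lemma step_connected (d : PData) (hd : (dGraph d).Connected) :
    (dGraph (parasolStep d)).Connected := by
  have hw : ∀ u v : d.1, (dGraph d).Walk u v →
      (dGraph (parasolStep d)).Reachable (Sum.inl u) (Sum.inl v) := by
    intro u v w
    induction w with
    | nil => exact SimpleGraph.Reachable.refl _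
    | cons h p ih =>
      refine SimpleGraph.Reachable.trans ?_ ih
      obtain ⟨-, ⟨e, he⟩ | ⟨e, he⟩⟩ := (SimpleGraph.fromRel_adj _ _ _).1 h
      · have := step_reach_edge d e
        rw [he] at this
        exact this
      · have := step_reach_edge d e
        rw [he] at this
        exact this.symm
  have hr : ∀ u v : d.1, (dGraph (parasolStep d)).Reachable (Sum.inl u) (Sum.inl v) := by
    intro u v
    obtain ⟨w⟩ := hd.preconnected u v
    exact hw u v w
  obtain ⟨u⟩ := hd.nonempty
  refine (SimpleGraph.connected_iff_exists_forall_reachable _).2 ⟨Sum.inl u, ?_⟩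
  rintro (v | ⟨e, ⟨⟩ | i⟩)
  · exact hr u v
  · exact (hr u _).trans (step_adj_rb d e).reachable
  · exact ((hr u _).trans (step_adj_rb d e).reachable).trans (step_adj_bt d e i).reachable

lemma data_connected (n : ℕ) : (dGraph (parasolData n)).Connected := by
  induction n with
  | zero => exact dGraph_base_connected
  | succ n ih => exact step_connected _ ih

lemma edge_dist (d : PData) (hd : (dGraph d).Connected) (u : d.1) (e : d.2.1) :
    (dGraph d).dist u (d.2.2 e).1 ≤ (dGraph d).dist u (d.2.2 e).2 + 1 ∧
    (dGraph d).dist u (d.2.2 e).2 ≤ (dGraph d).dist u (d.2.2 e).1 + 1 := by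
  by_cases h : (d.2.2 e).1 = (d.2.2 e).2
  · rw [h]; omega
  · have ha : (dGraph d).Adj (d.2.2 e).1 (d.2.2 e).2 :=
      (SimpleGraph.fromRel_adj _ _ _).2 ⟨h, Or.inl ⟨e, rfl⟩⟩
    have h1 := SimpleGraph.dist_eq_one_iff_adj.2 ha
    have h2 := SimpleGraph.dist_eq_one_iff_adj.2 ha.symm
    have h3 := hd.dist_triangle (u := u) (v := (d.2.2 e).1) (w := (d.2.2 e).2)
    have h4 := hd.dist_triangle (u := u) (v := (d.2.2 e).2) (w := (d.2.2 e).1)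
    omega

def pot (d : PData) (u : d.1) : (parasolStep d).1 → ℕ
  | Sum.inl w => 3 * (dGraph d).dist u w
  | Sum.inr (e, Sum.inl _) =>
      min (3 * (dGraph d).dist u (d.2.2 e).1 + 1) (3 * (dGraph d).dist u (d.2.2 e).2 + 2)
  | Sum.inr (e, Sum.inr _) =>
      min (3 * (dGraph d).dist u (d.2.2 e).1 + 2) (3 * (dGraph d).dist u (d.2.2 e).2 + 1)

lemma pot_edge (d : PData) (hd : (dGraph d).Connected) (u : d.1) (e : (parasolStep d).2.1) :
    pot d u ((parasolStep d).2.2 e).1 ≤ pot d u ((parasolStep d).2.2 e).2 + 1 ∧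
    pot d u ((parasolStep d).2.2 e).2 ≤ pot d u ((parasolStep d).2.2 e).1 + 1 := by
  rcases e with ⟨e, ⟨⟩ | i | i⟩ <;>
  · have := edge_dist d hd u e
    simp only [pot, parasolStep]
    omega

lemma step_dist (d : PData) (hd : (dGraph d).Connected) (u v : d.1) :
    3 * (dGraph d).dist u v ≤ (dGraph (parasolStep d)).dist (Sum.inl u) (Sum.inl v) := by
  have key : ∀ x y : (parasolStep d).1, ∀ w : (dGraph (parasolStep d)).Walk x y,
      pot d u y ≤ pot d u x + w.length := by
    intro x y w
    induction w with
    | nil => simp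
    | cons h p ih =>
      rw [SimpleGraph.Walk.length_cons]
      obtain ⟨-, ⟨e, he⟩ | ⟨e, he⟩⟩ := (SimpleGraph.fromRel_adj _ _ _).1 h
      · have := pot_edge d hd u e
        rw [he] at this
        simp only at this
        omega
      · have := pot_edge d hd u e
        rw [he] at this
        simp only at this
        omega
  obtain ⟨w, hw⟩ := (step_connected d hd).exists_walk_length_eq_dist (Sum.inl u) (Sum.inl v)
  have := key _ _ w
  rw [hw] at this
  simpa [pot] using this

lemma step_dist_tt (d : PData) (hd : (dGraph d).Connected) (e : d.2.1) (i j : ℕ) (hij : i ≠ j) :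
    2 ≤ (dGraph (parasolStep d)).dist (Sum.inr (e, Sum.inr i)) (Sum.inr (e, Sum.inr j)) := by
  have hc := step_connected d hd
  have h0 : (dGraph (parasolStep d)).dist (Sum.inr (e, Sum.inr i)) (Sum.inr (e, Sum.inr j)) ≠ 0 := by
    intro h
    have h' := hc.dist_eq_zero_iff.1 h
    exact hij (Sum.inr_injective (congrArg Prod.snd (Sum.inr_injective h')))
  have h1 : (dGraph (parasolStep d)).dist (Sum.inr (e, Sum.inr i)) (Sum.inr (e, Sum.inr j)) ≠ 1 := by
    intro h
    obtain ⟨-, ⟨e', he⟩ | ⟨e', he⟩⟩ :=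
      (SimpleGraph.fromRel_adj _ _ _).1 (SimpleGraph.dist_eq_one_iff_adj.1 h)
    · rcases e' with ⟨e', ⟨⟩ | i | i⟩ <;> simp [parasolStep] at he
    · rcases e' with ⟨e', ⟨⟩ | i | i⟩ <;> simp [parasolStep] at he
  omega

lemma rolewicz_nonneg (Y : Type*) [SeminormedAddCommGroup Y] (t : ℝ) :
    0 ≤ sSup (rolewiczSet Y t) := by
  apply Real.sSup_nonneg
  rintro s ⟨x, -, y, -, -, rfl⟩
  exact Real.iInf_nonneg fun i => by positivity

lemma rolewicz_bdd (Y : Type*) [SeminormedAddCommGroup Y] (t : ℝ) :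
    BddAbove (rolewiczSet Y t) := by
  refine ⟨1, ?_⟩
  rintro s ⟨x, hx, y, hy, -, rfl⟩
  have hb : BddBelow (Set.range fun i => ‖x - y i‖ / 2) :=
    ⟨0, by rintro _ ⟨i, rfl⟩; positivity⟩
  refine (ciInf_le hb 0).trans ?_
  have := norm_sub_le x (y 0)
  have := hy 0
  linarith

/-- The contraction along one parasol. -/
lemma parasol_contract (Y : Type*) [NormedAddCommGroup Y] [NormedSpace ℝ Y]
    (L t : ℝ) (hL : 0 < L) (r b s : Y) (z : ℕ → Y)
    (hrb : dist r b ≤ L) (hbt : ∀ i, dist b (z i) ≤ L) (hts : ∀ i, dist (z i) s ≤ L)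
    (hsep : ∀ i j, i ≠ j → t * L ≤ dist (z i) (z j)) :
    dist r s ≤ 3 * L * (1 - (2 / 3) * rolewiczMod Y t) := by
  have hn : ∀ w : Y, ‖L⁻¹ • w‖ = ‖w‖ / L := fun w => by
    rw [norm_smul, Real.norm_eq_abs, abs_of_pos (inv_pos.2 hL)]; field_simp
  have hmem : (⨅ i, ‖L⁻¹ • (r - b) - L⁻¹ • (z i - b)‖ / 2) ∈ rolewiczSet Y t := by
    refine ⟨L⁻¹ • (r - b), ?_, fun i => L⁻¹ • (z i - b), ?_, ?_, rfl⟩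
    · rw [hn, div_le_one hL, ← dist_eq_norm]; exact hrb
    · intro i
      rw [hn, div_le_one hL, ← dist_eq_norm, dist_comm]; exact hbt i
    · intro i j hij
      rw [← smul_sub, hn, le_div_iff₀ hL, sub_sub_sub_cancel_right, ← dist_eq_norm]
      exact hsep i j hij
  have h1 := le_csSup (rolewicz_bdd Y t) hmem
  have h2 : (dist r s - L) / (2 * L) ≤ ⨅ i, ‖L⁻¹ • (r - b) - L⁻¹ • (z i - b)‖ / 2 := by
    refine le_ciInf fun i => ?_
    rw [← smul_sub, hn, sub_sub_sub_cancel_right, ← dist_eq_norm, div_div, mul_comm L 2]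
    gcongr
    have := dist_triangle r (z i) s
    have := hts i
    linarith
  have h3 := h2.trans h1
  rw [div_le_iff₀ (by positivity)] at h3
  unfold rolewiczMod
  linarith

lemma lip_of_edges (Y : Type*) [NormedAddCommGroup Y] (d : PData) (hd : (dGraph d).Connected)
    (f : d.1 → Y) (K : ℝ) (h : ∀ e : d.2.1, dist (f (d.2.2 e).1) (f (d.2.2 e).2) ≤ K) (u v : d.1) :
    dist (f u) (f v) ≤ K * ((dGraph d).dist u v : ℝ) := by
  have key : ∀ x y : d.1, ∀ w : (dGraph d).Walk x y, dist (f x) (f y) ≤ K * (w.length : ℝ) := by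
    intro x y w
    induction w with
    | nil => simp
    | @cons a b c h' p ih =>
      rw [SimpleGraph.Walk.length_cons]
      have hab : dist (f a) (f b) ≤ K := by
        obtain ⟨-, ⟨e, he⟩ | ⟨e, he⟩⟩ := (SimpleGraph.fromRel_adj _ _ _).1 h'
        · have := h e
          rw [he] at this
          exact this
        · have := h e
          rw [he] at this
          rw [dist_comm]
          exact this
      have := dist_triangle (f a) (f b) (f c)
      push_cast
      linarith
  obtain ⟨w, hw⟩ := hd.exists_walk_length_eq_dist u v
  have := key _ _ w
  rwa [hw] at this

lemma data_edge_nonempty (n : ℕ) : Nonempty (parasolData n).2.1 := by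
  induction n with
  | zero => exact ⟨(Sum.inl () : Unit ⊕ ℕ ⊕ ℕ)⟩
  | succ n ih =>
    obtain ⟨e⟩ := ih
    exact ⟨((e, Sum.inl ()) : (parasolData n).2.1 × (Unit ⊕ ℕ ⊕ ℕ))⟩

lemma main_aux (Y : Type*) [NormedAddCommGroup Y] [NormedSpace ℝ Y]
    (d : PData) (hd : (dGraph d).Connected) (hne : Nonempty d.2.1) (D : ℝ) (hD : 1 ≤ D)
    (f : (parasolStep d).1 → Y) (L C : ℝ) (hf : Function.Injective f)
    (hL : ∀ x y, dist (f x) (f y) ≤ L * ((dGraph (parasolStep d)).dist x y : ℝ))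
    (hC : ∀ x y, ((dGraph (parasolStep d)).dist x y : ℝ) ≤ C * dist (f x) (f y))
    (hLC : L * C ≤ D) :
    cDist d.1 Y (fun x y => ((dGraph d).dist x y : ℝ)) (fun a b : Y => dist a b) ≤
      ENNReal.ofReal (D * (1 - (2 / 3) * rolewiczMod Y (2 / D))) := by
  have hadj : ∀ x y, (dGraph (parasolStep d)).Adj x y → dist (f x) (f y) ≤ L := by
    intro x y h
    have := hL x y
    rwa [SimpleGraph.dist_eq_one_iff_adj.2 h, Nat.cast_one, mul_one] at this
  obtain ⟨e₀⟩ := hne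
  have hLpos : 0 < L := by
    have h := step_adj_rb d e₀
    exact (dist_pos.2 fun hh => h.ne (hf hh)).trans_le (hadj _ _ h)
  have hsep : ∀ e : d.2.1, ∀ i j : ℕ, i ≠ j →
      2 ≤ C * dist (f (Sum.inr (e, Sum.inr i))) (f (Sum.inr (e, Sum.inr j))) := by
    intro e i j hij
    refine le_trans ?_ (hC _ _)
    exact_mod_cast step_dist_tt d hd e i j hij
  have hCpos : 0 < C := by
    have := hsep e₀ 0 1 (by norm_num)
    by_contra hc
    have := mul_nonpos_of_nonpos_of_nonneg (not_lt.1 hc)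
      (dist_nonneg (x := f (Sum.inr (e₀, Sum.inr 0))) (y := f (Sum.inr (e₀, Sum.inr 1))))
    linarith
  have hDpos : 0 < D := by linarith
  have hβ : 0 ≤ 1 - (2 / 3) * rolewiczMod Y (2 / D) := by
    have := rolewicz_nonneg Y (2 / D)
    unfold rolewiczMod
    linarith
  have hmem : (3 * L * (1 - (2 / 3) * rolewiczMod Y (2 / D))) * (C / 3) ∈
      distortionSet d.1 Y (fun x y => ((dGraph d).dist x y : ℝ)) (fun a b : Y => dist a b) := by
    refine ⟨fun x => f (Sum.inl x), fun x y h => Sum.inl_injective (hf h), _, _, ?_, ?_, rfl⟩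
    · refine lip_of_edges Y d hd (fun x => f (Sum.inl x)) _ fun e => ?_
      refine parasol_contract Y L (2 / D) hLpos _ (f (Sum.inr (e, Sum.inl ()))) _
        (fun i => f (Sum.inr (e, Sum.inr i))) (hadj _ _ (step_adj_rb d e))
        (fun i => hadj _ _ (step_adj_bt d e i)) (fun i => hadj _ _ (step_adj_ts d e i)) ?_
      intro i j hij
      have h2 := hsep e i j hij
      rw [div_mul_eq_mul_div, div_le_iff₀ hDpos]
      have h3 := mul_le_mul_of_nonneg_right h2 hLpos.le
      have h4 := mul_le_mul_of_nonneg_left hLC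
        (dist_nonneg (x := f (Sum.inr (e, Sum.inr i))) (y := f (Sum.inr (e, Sum.inr j))))
      linarith
    · intro x y
      have h1 := hC (Sum.inl x) (Sum.inl y)
      have h2 : (3 : ℝ) * ((dGraph d).dist x y : ℝ) ≤
          ((dGraph (parasolStep d)).dist (Sum.inl x) (Sum.inl y) : ℝ) := by
        exact_mod_cast step_dist d hd x y
      simp only
      linarith
  refine (iInf₂_le _ hmem).trans (ENNReal.ofReal_le_ofReal ?_)
  have := mul_le_mul_of_nonneg_right hLC hβ
  linarith

/-- Proposition 2.7: if a Banach space `Y` has property (β) and the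
level-`ℓ` parasol graph `P^ω_ℓ` (here `PVert (ℓ-1)` with its shortest path metric)
embeds into `Y` with distortion at most `D`, then
`c_Y(P^ω_{ℓ-1}) ≤ D (1 - (2/3) β̄_Y(2/D))`. -/
theorem parasol_self_improvement
    (Y : Type*) [NormedAddCommGroup Y] [NormedSpace ℝ Y] [CompleteSpace Y]
    (hY : HasBeta Y) (l : ℕ) (hl : 2 ≤ l) (D : ℝ) (hD : 1 ≤ D)
    (hemb : ∃ (f : PVert (l - 1) → Y) (L C : ℝ), Function.Injective f ∧
      LipUB (pGDist (l - 1)) (fun a b : Y => dist a b) f L ∧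
      CoLipUB (pGDist (l - 1)) (fun a b : Y => dist a b) f C ∧ L * C ≤ D) :
    cDist (PVert (l - 2)) Y (pGDist (l - 2)) (fun a b : Y => dist a b) ≤
      ENNReal.ofReal (D * (1 - (2 / 3) * rolewiczMod Y (2 / D))) := by
  obtain ⟨n, rfl⟩ : ∃ n, l = n + 2 := ⟨l - 2, by omega⟩
  obtain ⟨f, L, C, hf, hL, hC, hLC⟩ := hemb
  exact main_aux Y (parasolData n) (data_connected n) (data_edge_nonempty n) D hD f L C hf hL hC hLC

end
end
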